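/- arXiv:1607.08413 — 2 statements merged into one kernel-verified Lean document; each statement's English description precedes it below -/
import Mathlib

section
/- Let n ≥ 2 be an integer, Γ = ℝ × {0, 1, …, n−1}, and let Λ ⊂ ℝ² be a closed set that is 2-periodic with respect to the second variable. If the set Π̃_su(Λ) = Π^n(Λ) ∪ (Π^1(Λ) \ Π^{1*}(Λ)) ∪ (Π^{n−1}(Λ) \ Π^{(n−1)*}(Λ)) ∪ ⋃_{j=2}^{n−2} (Π^j(Λ) \ Π^{j*}_{su}(Λ)) is dense in ℝ, then (Γ, Λ) is a Heisenberg uniqueness pair. -/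
open MeasureTheory Complex

/-- Fourier transform with the convention `f̂(ξ) = ∫ e^{πixξ} f(x) dx`. -/
noncomputable def FT (f : ℝ → ℂ) (ξ : ℝ) : ℂ :=
  ∫ x : ℝ, Complex.exp (Real.pi * Complex.I * x * ξ) * f x

/-- `e^{πiη}`. -/
noncomputable def cexpEta (η : ℝ) : ℂ := Complex.exp (Real.pi * Complex.I * η)

/-- `Λ` is 2-periodic with respect to the second variable. -/
def Periodic2 (Λ : Set (ℝ × ℝ)) : Prop :=
  ∀ ξ η : ℝ, (ξ, η) ∈ Λ ↔ (ξ, η + 2) ∈ Λ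

/-- The projection `Π(Λ)` of `Λ` on the x-axis. -/
def proj (Λ : Set (ℝ × ℝ)) : Set ℝ := {ξ | ∃ η : ℝ, (ξ, η) ∈ Λ}

/-- `Img(ξ) = {η ∈ [0,2) : (ξ,η) ∈ Λ}`. -/
def Img (Λ : Set (ℝ × ℝ)) (ξ : ℝ) : Set ℝ := {η | η ∈ Set.Ico (0 : ℝ) 2 ∧ (ξ, η) ∈ Λ}

/-- `Π^k(Λ)` for `k < n`: points of `Π(Λ)` whose `Img` has exactly `k` elements. -/
def projExact (Λ : Set (ℝ × ℝ)) (k : ℕ) : Set ℝ :=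
  {ξ | ξ ∈ proj Λ ∧ (Img Λ ξ).encard = k}

/-- `Π^n(Λ)`: points of `Π(Λ)` whose `Img` has at least `n` elements. -/
def projAtLeast (Λ : Set (ℝ × ℝ)) (n : ℕ) : Set ℝ :=
  {ξ | ξ ∈ proj Λ ∧ (n : ℕ∞) ≤ (Img Λ ξ).encard}

/-- `ψ ∈ P^{E,ξ}_l` : there are an open interval `I ∋ ξ` and `φ_1,…,φ_{l-1} ∈ L¹(ℝ)` with
`φ̂_1 + φ̂_2 ψ + ⋯ + φ̂_{l-1} ψ^{l-2} + ψ^{l-1} = 0` on `I ∩ E`. -/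
def Pmem (E : Set ℝ) (ξ : ℝ) (l : ℕ) (ψ : ℝ → ℂ) : Prop :=
  ∃ a b : ℝ, ξ ∈ Set.Ioo a b ∧
    ∃ φ : Fin (l - 1) → ℝ → ℂ, (∀ i, Integrable (φ i)) ∧
      ∀ x ∈ Set.Ioo a b ∩ E,
        (∑ i : Fin (l - 1), FT (φ i) x * ψ x ^ (i : ℕ)) + ψ x ^ (l - 1) = 0

/-- `Π^{1*}(Λ)`: those `ξ ∈ Π^1(Λ)` such that `χ ∈ P^{Π^1(Λ),ξ}_n`, where
`χ(ξ') = e^{πiη}` with `η` the unique element of `Img(ξ')`. -/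
def projOneStar (Λ : Set (ℝ × ℝ)) (n : ℕ) : Set ℝ :=
  {ξ | ξ ∈ projExact Λ 1 ∧ ∃ χ : ℝ → ℂ,
    (∀ ξ' ∈ projExact Λ 1, ∀ η ∈ Img Λ ξ', χ ξ' = cexpEta η) ∧
    Pmem (projExact Λ 1) ξ n χ}

/-- `Π^{k*}_{su}(Λ)`. -/
def projStarSu (Λ : Set (ℝ × ℝ)) (n k : ℕ) : Set ℝ :=
  {ξ | ξ ∈ projExact Λ k ∧ ∃ a b : ℝ, ξ ∈ Set.Ioo a b ∧
    ∃ φ : Fin (n - 1) → ℝ → ℂ, (∀ i, Integrable (φ i)) ∧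
      ∀ ξ' ∈ Set.Ioo a b ∩ projExact Λ k, ∀ η ∈ Img Λ ξ',
        (∑ i : Fin (n - 1), FT (φ i) ξ' * cexpEta η ^ (i : ℕ)) = -(cexpEta η ^ (n - 1))}

/-- `Π^{k*}_{ne}(Λ)` for `k ≥ 2`. -/
def projStarNe (Λ : Set (ℝ × ℝ)) (k : ℕ) : Set ℝ :=
  {ξ | ξ ∈ projExact Λ k ∧ ∃ a b : ℝ, ξ ∈ Set.Ioo a b ∧
    ∃ φ : Fin k → ℝ → ℂ, (∀ i, Integrable (φ i)) ∧
      ∀ ξ' ∈ Set.Ioo a b ∩ projExact Λ k, ∀ η ∈ Img Λ ξ',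
        (∑ i : Fin k, FT (φ i) ξ' * cexpEta η ^ (i : ℕ)) = -(cexpEta η ^ k)}

/-- `(Γ, Λ)` with `Γ = ℝ × {0,…,n-1}` is a Heisenberg uniqueness pair: every admissible
measure `μ = Σ_m (x ↦ (x,m))_*(f_m dx)` (with each `f_m ∈ L¹(ℝ)`) whose Fourier transform
`μ̂(ξ,η) = Σ_m e^{mπiη} f̂_m(ξ)` vanishes on `Λ` must be zero, i.e. each `f_m = 0` a.e. -/
def IsHUP (n : ℕ) (Λ : Set (ℝ × ℝ)) : Prop :=
  ∀ f : Fin n → ℝ → ℂ, (∀ m, Integrable (f m)) →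
    (∀ ξ η : ℝ, (ξ, η) ∈ Λ → ∑ m : Fin n, cexpEta η ^ (m : ℕ) * FT (f m) ξ = 0) →
    ∀ m, f m =ᵐ[volume] (0 : ℝ → ℂ)


open scoped FourierTransform Convolution Topology ContDiff
open Filter

lemma FT_eq (f : ℝ → ℂ) (ξ : ℝ) : FT f ξ = 𝓕 f (-ξ / 2) := by
  rw [Real.fourier_real_eq_integral_exp_smul]
  unfold FT
  congr 1
  ext x
  rw [smul_eq_mul]
  congr 2
  push_cast
  ring

lemma FT_conv {f g : ℝ → ℂ} (hf : Integrable f) (hg : Integrable g) (ξ : ℝ) :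
    FT (f ⋆[ContinuousLinearMap.mul ℂ ℂ] g) ξ = FT f ξ * FT g ξ := by
  rw [FT_eq, FT_eq, FT_eq, Real.fourier_mul_convolution_eq hf hg]

lemma FT_congr {f g : ℝ → ℂ} (h : f =ᵐ[volume] g) (ξ : ℝ) : FT f ξ = FT g ξ := by
  rw [FT_eq, FT_eq, Real.fourier_congr_ae h]

lemma FT_int {f : ℝ → ℂ} (hf : Integrable f) (ξ : ℝ) :
    Integrable fun x : ℝ => Complex.exp (Real.pi * Complex.I * x * ξ) * f x := by
  refine hf.bdd_mul (c := 1) (by fun_prop) (Eventually.of_forall fun x => ?_)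
  rw [show (Real.pi * Complex.I * x * ξ : ℂ) = ((Real.pi * x * ξ : ℝ) : ℂ) * Complex.I by
    push_cast; ring, Complex.norm_exp_ofReal_mul_I]

lemma FT_add {f g : ℝ → ℂ} (hf : Integrable f) (hg : Integrable g) (ξ : ℝ) :
    FT (f + g) ξ = FT f ξ + FT g ξ := by
  unfold FT
  rw [← integral_add (FT_int hf ξ) (FT_int hg ξ)]
  simp [mul_add]

lemma FT_sub {f g : ℝ → ℂ} (hf : Integrable f) (hg : Integrable g) (ξ : ℝ) :
    FT (f - g) ξ = FT f ξ - FT g ξ := by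
  unfold FT
  rw [← integral_sub (FT_int hf ξ) (FT_int hg ξ)]
  simp [mul_sub]

lemma FT_smul (c : ℂ) (f : ℝ → ℂ) (ξ : ℝ) :
    FT (fun x => c * f x) ξ = c * FT f ξ := by
  unfold FT
  rw [← integral_const_mul]
  congr 1
  ext x
  ring

lemma FT_continuous {f : ℝ → ℂ} (hf : Integrable f) : Continuous (FT f) := by
  have h : Continuous (𝓕 f) := VectorFourier.fourierIntegral_continuous
    Real.continuous_fourierChar (by exact continuous_inner) hf
  rw [show FT f = fun ξ => 𝓕 f (-ξ / 2) from funext fun ξ => FT_eq f ξ]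
  fun_prop

lemma FT_inj {f : ℝ → ℂ} (hf : Integrable f) (h : ∀ ξ, FT f ξ = 0) : f =ᵐ[volume] 0 := by
  have h' : 𝓕 f = 0 := by
    ext w
    have := h (-2 * w)
    rw [FT_eq] at this
    rw [show w = -(-2 * w) / 2 by ring]
    simpa using this
  refine ae_eq_zero_of_integral_contDiff_smul_eq_zero hf.locallyIntegrable ?_
  intro g g_smooth g_cpt
  have hg₁ : HasCompactSupport (Complex.ofRealCLM ∘ g) := g_cpt.comp_left rfl
  have hg₂ : ContDiff ℝ ∞ (Complex.ofRealCLM ∘ g) := by fun_prop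
  let G := hg₁.toSchwartzMap hg₂
  have key : ∫ ξ, (𝓕 f ξ) • ((𝓕⁻ G) ξ) = ∫ x, f x • (𝓕 (𝓕⁻ G : SchwartzMap ℝ ℂ) x) := by
    have := VectorFourier.integral_fourierIntegral_smul_eq_flip (L := innerₗ ℝ) (μ := volume)
      (ν := volume) Real.continuous_fourierChar continuous_inner hf (𝓕⁻ G).integrable
    rw [flip_innerₗ] at this
    exact this
  rw [h', FourierTransform.fourier_fourierInv_eq] at key
  simp only [Pi.zero_apply, zero_smul, integral_zero] at key
  rw [key]
  congr 1
  ext x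
  simp [G, mul_comm]

lemma exists_V : ∃ V : ℝ → ℂ, Integrable V ∧ ∀ ξ ∈ Set.Ioo (-1 : ℝ) 1, FT V ξ = 1 := by
  let b : ContDiffBump (0 : ℝ) := ⟨1, 2, by norm_num, by norm_num⟩
  have hg₁ : HasCompactSupport (Complex.ofRealCLM ∘ b) := b.hasCompactSupport.comp_left rfl
  have hg₂ : ContDiff ℝ ∞ (Complex.ofRealCLM ∘ b) := by
    exact Complex.ofRealCLM.contDiff.comp b.contDiff
  let G := hg₁.toSchwartzMap hg₂
  refine ⟨(𝓕⁻ G : SchwartzMap ℝ ℂ), (𝓕⁻ G).integrable, fun ξ hξ => ?_⟩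
  rw [FT_eq, ← SchwartzMap.fourier_coe, FourierTransform.fourier_fourierInv_eq]
  have : b (-ξ / 2) = 1 := b.one_of_mem_closedBall (by
    rw [mem_closedBall_zero_iff, Real.norm_eq_abs, abs_le]
    constructor <;> simp only [b] <;> linarith [hξ.1, hξ.2])
  simp [G, this]

lemma FT_affine {f : ℝ → ℂ} (hf : Integrable f) (t ω₀ : ℝ) (ht : t ≠ 0) :
    ∃ g : ℝ → ℂ, Integrable g ∧ ∀ ξ, FT g ξ = FT f (ω₀ + t * ξ) := by
  refine ⟨fun x => ((|t|⁻¹ : ℝ) : ℂ) *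
    (Complex.exp (Real.pi * Complex.I * ((x / t : ℝ) : ℂ) * ω₀) * f (x / t)), ?_, fun ξ => ?_⟩
  · exact ((FT_int hf ω₀).comp_div ht).const_mul _
  · rw [FT_smul]
    unfold FT
    have := Measure.integral_comp_div (fun y : ℝ => Complex.exp (Real.pi * Complex.I * y * ((ω₀ + t * ξ : ℝ) : ℂ)) * f y) t
    have h2 : (∫ x : ℝ, Complex.exp (Real.pi * Complex.I * x * ξ) *
        (Complex.exp (Real.pi * Complex.I * ((x / t : ℝ) : ℂ) * ω₀) * f (x / t))) =
        |t| • ∫ y : ℝ, Complex.exp (Real.pi * Complex.I * y * ((ω₀ + t * ξ : ℝ) : ℂ)) * f y := by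
      rw [← this]
      congr 1
      ext x
      rw [← mul_assoc, ← Complex.exp_add]
      congr 2
      push_cast
      have : (t : ℂ) ≠ 0 := by exact_mod_cast ht
      field_simp
      ring
    rw [h2, Complex.real_smul, ← mul_assoc, ← Complex.ofReal_mul, inv_mul_cancel₀ (abs_ne_zero.2 ht)]
    simp

noncomputable def trMod (V : ℝ → ℂ) (y : ℝ) : ℝ := ∫ x, ‖V x - V (x - y)‖

lemma trMod_continuous {V : ℝ → ℂ} (hV : Integrable V) : Continuous (trMod V) := by
  let W : Lp ℂ 1 (volume : Measure ℝ) := hV.toL1 V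
  let g : C(ℝ, C(ℝ, ℝ)) := (ContinuousMap.mk (fun a : ℝ × ℝ => a.2 - a.1) (by fun_prop)).curry
  have hg : ∀ y, MeasurePreserving (g y) volume volume := fun y =>
    measurePreserving_sub_right volume y
  have h1 : Continuous (fun y => Lp.compMeasurePreserving (g y) (hg y) W) :=
    continuous_const.compMeasurePreservingLp g.continuous hg (by simp)
  have h2 : trMod V = fun y => ‖W - Lp.compMeasurePreserving (g y) (hg y) W‖ := by
    ext y
    rw [L1.norm_eq_integral_norm]
    refine integral_congr_ae ?_
    have e1 := hV.coeFn_toL1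
    have e2 := Lp.coeFn_compMeasurePreserving W (hg y)
    have e3 := (hg y).quasiMeasurePreserving.ae_eq_comp e1
    filter_upwards [e1, e2, e3, Lp.coeFn_sub W (Lp.compMeasurePreserving (g y) (hg y) W)]
      with x a1 a2 a3 a4
    rw [a4, Pi.sub_apply, a1, a2, a3]
    rfl
  rw [h2]
  fun_prop

lemma trMod_zero (V : ℝ → ℂ) : trMod V 0 = 0 := by simp [trMod]

lemma trMod_nonneg (V : ℝ → ℂ) (y : ℝ) : 0 ≤ trMod V y := integral_nonneg fun _ => norm_nonneg _

lemma trMod_le {V : ℝ → ℂ} (hV : Integrable V) (y : ℝ) : trMod V y ≤ 2 * ∫ x, ‖V x‖ := by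
  calc trMod V y ≤ ∫ x, (‖V x‖ + ‖V (x - y)‖) :=
        integral_mono (hV.sub (hV.comp_sub_right y)).norm
          (hV.norm.add (hV.comp_sub_right y).norm) fun x => norm_sub_le _ _
    _ = 2 * ∫ x, ‖V x‖ := by
        rw [integral_add hV.norm (hV.comp_sub_right y).norm,
          integral_sub_right_eq_self (fun x => ‖V x‖) y]
        ring

/-- Minkowski's integral inequality for `L¹`. -/
lemma mink {F : ℝ × ℝ → ℂ} (hF : Integrable F (volume.prod volume)) :
    ∫ x, ‖∫ y, F (x, y)‖ ≤ ∫ y, ∫ x, ‖F (x, y)‖ := by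
  rw [← integral_integral_swap (f := fun x y => ‖F (x, y)‖) hF.norm]
  exact integral_mono hF.integral_prod_left.norm hF.norm.integral_prod_left
    fun x => norm_integral_le_integral_norm _

lemma conv_norm_le {u g : ℝ → ℂ} (hu : Integrable u) (hg : Integrable g) :
    ∫ x, ‖(u ⋆[ContinuousLinearMap.mul ℂ ℂ] g) x‖ ≤ (∫ x, ‖u x‖) * ∫ x, ‖g x‖ := by
  have h := mink (hu.convolution_integrand (ContinuousLinearMap.mul ℂ ℂ) hg)
  refine h.trans (le_of_eq ?_)
  simp only [ContinuousLinearMap.mul_apply', norm_mul, integral_const_mul]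
  rw [← integral_mul_const]
  congr 1
  ext y
  rw [integral_sub_right_eq_self (fun x => ‖g x‖) y]

lemma sub_conv_norm_le {g V : ℝ → ℂ} (hg : Integrable g) (hV : Integrable V)
    (h1 : ∫ y, g y = 1) :
    ∫ x, ‖(V - g ⋆[ContinuousLinearMap.mul ℂ ℂ] V) x‖ ≤ ∫ y, ‖g y‖ * trMod V y := by
  have c1 := hg.convolution_integrand (ContinuousLinearMap.mul ℂ ℂ) hV
  have c2 : Integrable (fun p : ℝ × ℝ => V p.1 * g p.2) (volume.prod volume) := hV.mul_prod hg
  have c3 := c2.sub c1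
  have h := mink c3
  have e : ∫ x, ‖(V - g ⋆[ContinuousLinearMap.mul ℂ ℂ] V) x‖ =
      ∫ x, ‖∫ y, ((fun p : ℝ × ℝ => V p.1 * g p.2) -
        fun p : ℝ × ℝ => (ContinuousLinearMap.mul ℂ ℂ) (g p.2) (V (p.1 - p.2))) (x, y)‖ := by
    refine integral_congr_ae ?_
    filter_upwards [hg.ae_convolution_exists (ContinuousLinearMap.mul ℂ ℂ) hV] with x hx
    simp only [Pi.sub_apply]
    rw [integral_sub (hg.const_mul _) hx.integrable, integral_const_mul, h1, mul_one]
    rfl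
  rw [e]
  refine h.trans (le_of_eq ?_)
  congr 1
  ext y
  rw [trMod, ← integral_const_mul]
  congr 1
  ext x
  rw [← norm_mul]
  simp only [Pi.sub_apply, ContinuousLinearMap.mul_apply']
  congr 1
  ring

lemma neumann {u h : ℝ → ℂ} (hu : Integrable u) (hh : Integrable h) (h1 : ∫ x, ‖u x‖ < 1) :
    ∃ φ : ℝ → ℂ, Integrable φ ∧ ∀ ξ, FT φ ξ = FT h ξ + FT u ξ * FT φ ξ := by
  let L := ContinuousLinearMap.mul ℂ ℂ
  have hi : ∀ g : Lp ℂ 1 (volume : Measure ℝ), Integrable (h + u ⋆[L] g) := fun g =>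
    hh.add (hu.integrable_convolution L (L1.integrable_coeFn g))
  let T : Lp ℂ 1 (volume : Measure ℝ) → Lp ℂ 1 (volume : Measure ℝ) := fun g => (hi g).toL1 _
  have hK : 0 ≤ ∫ x, ‖u x‖ := integral_nonneg fun _ => norm_nonneg _
  have hT : ContractingWith ⟨∫ x, ‖u x‖, hK⟩ T := by
    refine ⟨by exact_mod_cast h1, LipschitzWith.of_dist_le_mul fun g₁ g₂ => ?_⟩
    rw [dist_eq_norm, dist_eq_norm, L1.norm_eq_integral_norm, L1.norm_eq_integral_norm]
    have i1 := L1.integrable_coeFn g₁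
    have i2 := L1.integrable_coeFn g₂
    have e : ∫ x, ‖(T g₁ - T g₂ : Lp ℂ 1 (volume : Measure ℝ)) x‖ =
        ∫ x, ‖(u ⋆[L] (g₁ - g₂ : Lp ℂ 1 (volume : Measure ℝ))) x‖ := by
      refine integral_congr_ae ?_
      have ec : (u ⋆[L] (g₁ - g₂ : Lp ℂ 1 (volume : Measure ℝ))) =
          (u ⋆[L] (fun y => g₁ y - g₂ y)) := by
        ext x
        refine integral_congr_ae ?_
        have := (quasiMeasurePreserving_sub_left_of_right_invariant volume x).ae_eq_comp
          (Lp.coeFn_sub g₁ g₂)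
        filter_upwards [this] with t ht
        simp only [Function.comp_apply] at ht
        rw [ht]
        rfl
      rw [ec]
      filter_upwards [Lp.coeFn_sub (T g₁) (T g₂), (hi g₁).coeFn_toL1, (hi g₂).coeFn_toL1,
        hu.ae_convolution_exists L i1, hu.ae_convolution_exists L i2] with x a1 a2 a3 a4 a5
      rw [a1, Pi.sub_apply]
      simp only [T]
      rw [a2, a3]
      simp only [Pi.add_apply, add_sub_add_left_eq_sub]
      congr 1
      simp only [convolution]
      rw [← integral_sub a4.integrable a5.integrable]
      simp
    rw [e]
    exact conv_norm_le hu (L1.integrable_coeFn _)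
  let φ := hT.fixedPoint
  have hφ : T φ = φ := hT.fixedPoint_isFixedPt
  refine ⟨φ, L1.integrable_coeFn φ, fun ξ => ?_⟩
  have := (hi φ).coeFn_toL1
  change (T φ : ℝ → ℂ) =ᵐ[volume] _ at this
  rw [hφ] at this
  refine (FT_congr this ξ).trans ?_
  rw [FT_add hh (hu.integrable_convolution L (L1.integrable_coeFn φ)),
    FT_conv hu (L1.integrable_coeFn φ)]

lemma small_scale {g V : ℝ → ℂ} (hg : Integrable g) (hV : Integrable V) :
    ∃ t : ℝ, 0 < t ∧ ∫ y, ‖g y‖ * trMod V (t * y) < 1 := by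
  have hc : Continuous (fun t : ℝ => ∫ y, ‖g y‖ * trMod V (t * y)) := by
    refine continuous_of_dominated (bound := fun y => ‖g y‖ * (2 * ∫ x, ‖V x‖)) ?_ ?_ ?_ ?_
    · intro t
      exact hg.norm.aestronglyMeasurable.mul
        ((trMod_continuous hV).comp (by fun_prop)).aestronglyMeasurable
    · intro t
      refine Eventually.of_forall fun y => ?_
      rw [norm_mul, norm_norm, Real.norm_of_nonneg (trMod_nonneg V _)]
      gcongr
      exact trMod_le hV _
    · exact hg.norm.mul_const _
    · refine Eventually.of_forall fun y => ?_
      have := trMod_continuous hV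
      fun_prop
  have h0 : (fun t : ℝ => ∫ y, ‖g y‖ * trMod V (t * y)) 0 < 1 := by simp [trMod_zero]
  have := (hc.tendsto 0).eventually (gt_mem_nhds h0)
  obtain ⟨ε, hε, H⟩ := Metric.eventually_nhds_iff.1 this
  refine ⟨ε / 2, by positivity, H ?_⟩
  rw [dist_zero_right, Real.norm_of_nonneg (by positivity)]
  linarith

theorem wiener {f : ℝ → ℂ} (hf : Integrable f) (ω₀ : ℝ) (h0 : FT f ω₀ ≠ 0) :
    ∃ a b : ℝ, ω₀ ∈ Set.Ioo a b ∧ ∀ h : ℝ → ℂ, Integrable h → ∃ φ : ℝ → ℂ, Integrable φ ∧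
      ∀ x ∈ Set.Ioo a b, FT φ x * FT f x = FT h x := by
  obtain ⟨V, hV, hV1⟩ := exists_V
  obtain ⟨g₁, hg₁, hg₁'⟩ := FT_affine hf 1 ω₀ one_ne_zero
  let g₀ : ℝ → ℂ := fun x => (FT f ω₀)⁻¹ * g₁ x
  have hg₀ : Integrable g₀ := hg₁.const_mul _
  have hg₀' : ∀ ξ, FT g₀ ξ = (FT f ω₀)⁻¹ * FT f (ω₀ + ξ) := by
    intro ξ
    rw [FT_smul, hg₁', one_mul]
  obtain ⟨t, ht, hlt⟩ := small_scale hg₀ hV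
  let g : ℝ → ℂ := fun x => ((t⁻¹ : ℝ) : ℂ) * g₀ (x / t)
  have hg : Integrable g := (hg₀.comp_div ht.ne').const_mul _
  have hg' : ∀ ξ, FT g ξ = FT g₀ (t * ξ) := by
    intro ξ
    rw [FT_smul]
    have h2 : FT (fun x => g₀ (x / t)) ξ = |t| • FT g₀ (t * ξ) := by
      unfold FT
      rw [← Measure.integral_comp_div (fun y : ℝ =>
        Complex.exp (Real.pi * Complex.I * y * ((t * ξ : ℝ) : ℂ)) * g₀ y) t]
      congr 1
      ext x
      congr 2
      push_cast
      have : (t : ℂ) ≠ 0 := by exact_mod_cast ht.ne'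
      field_simp
    rw [h2, Complex.real_smul, ← mul_assoc, ← Complex.ofReal_mul, abs_of_pos ht,
      inv_mul_cancel₀ ht.ne']
    simp
  have hg1 : ∫ y, g y = 1 := by
    have := hg' 0
    rw [mul_zero, hg₀', add_zero, inv_mul_cancel₀ h0] at this
    rw [← this]
    simp [FT]
  have hu := sub_conv_norm_le hg hV hg1
  have hs : ∫ y, ‖g y‖ * trMod V y = ∫ y, ‖g₀ y‖ * trMod V (t * y) := by
    have := Measure.integral_comp_div (fun y : ℝ => ‖g₀ y‖ * trMod V (t * y)) t
    have e : (∫ y, ‖g y‖ * trMod V y) =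
        t⁻¹ * ∫ y, ‖g₀ (y / t)‖ * trMod V (t * (y / t)) := by
      rw [← integral_const_mul]
      congr 1
      ext y
      rw [mul_div_cancel₀ y ht.ne', norm_mul, Complex.norm_real,
        Real.norm_of_nonneg (by positivity), mul_assoc]
    rw [e, this, abs_of_pos ht, smul_eq_mul, ← mul_assoc, inv_mul_cancel₀ ht.ne', one_mul]
  have hcv := hg.integrable_convolution (ContinuousLinearMap.mul ℂ ℂ) hV
  refine ⟨ω₀ - t, ω₀ + t, ⟨by linarith, by linarith⟩, fun h hh => ?_⟩
  obtain ⟨h', hh', hh''⟩ := FT_affine hh t ω₀ ht.ne'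
  obtain ⟨ψ, hψ, hψ'⟩ := neumann (hV.sub hcv) hh' (hu.trans_lt (hs ▸ hlt))
  obtain ⟨φ, hφ, hφ'⟩ := FT_affine hψ t⁻¹ (-ω₀ / t) (inv_ne_zero ht.ne')
  refine ⟨fun x => (FT f ω₀)⁻¹ * φ x, hφ.const_mul _, fun x hx => ?_⟩
  have hξ : (-ω₀ / t + t⁻¹ * x) ∈ Set.Ioo (-1 : ℝ) 1 := by
    rw [show -ω₀ / t + t⁻¹ * x = (x - ω₀) / t by field_simp; ring]
    constructor
    · rw [lt_div_iff₀ ht]; linarith [hx.1]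
    · rw [div_lt_iff₀ ht]; linarith [hx.2]
  rw [FT_smul, hφ']
  have hx' : ω₀ + t * (-ω₀ / t + t⁻¹ * x) = x := by field_simp; ring
  have hx2 : t * (-ω₀ / t + t⁻¹ * x) = x - ω₀ := by linarith
  have := hψ' (-ω₀ / t + t⁻¹ * x)
  rw [FT_sub hV hcv, FT_conv hg hV, hV1 _ hξ, hh'', hx', hg', hg₀', hx2, add_sub_cancel] at this
  linear_combination this

theorem wiener_strong {f : ℝ → ℂ} (hf : Integrable f) (ω₀ : ℝ) (h0 : FT f ω₀ ≠ 0) :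
    ∃ a b : ℝ, ω₀ ∈ Set.Ioo a b ∧ (∀ x ∈ Set.Ioo a b, FT f x ≠ 0) ∧
      ∀ h : ℝ → ℂ, Integrable h → ∃ φ : ℝ → ℂ, Integrable φ ∧
      ∀ x ∈ Set.Ioo a b, FT φ x * FT f x = FT h x := by
  obtain ⟨a, b, hab, H⟩ := wiener hf ω₀ h0
  have hev := (FT_continuous hf).continuousAt.eventually_ne h0
  obtain ⟨a', b', hab', H'⟩ := mem_nhds_iff_exists_Ioo_subset.1 hev
  refine ⟨max a a', min b b', ⟨max_lt hab.1 hab'.1, lt_min hab.2 hab'.2⟩,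
    fun x hx => H' ⟨(max_lt_iff.1 hx.1).2, (lt_min_iff.1 hx.2).2⟩, fun h hh => ?_⟩
  obtain ⟨φ, h1, h2⟩ := H h hh
  exact ⟨φ, h1, fun x hx => h2 x ⟨(max_lt_iff.1 hx.1).1, (lt_min_iff.1 hx.2).1⟩⟩

lemma star_of_ne {n : ℕ} (f : Fin n → ℝ → ℂ) (hf : ∀ m, Integrable (f m)) (m : Fin n)
    (hm : ∀ j, m < j → ∀ x, FT (f j) x = 0) (ξ : ℝ) (h0 : FT (f m) ξ ≠ 0) :
    ∃ a b : ℝ, ξ ∈ Set.Ioo a b ∧ ∃ φ : Fin (n - 1) → ℝ → ℂ, (∀ i, Integrable (φ i)) ∧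
      ∀ x ∈ Set.Ioo a b, ∀ z : ℂ, ∑ j : Fin n, z ^ (j : ℕ) * FT (f j) x = 0 →
        ∑ i : Fin (n - 1), FT (φ i) x * z ^ (i : ℕ) = -z ^ (n - 1) := by
  obtain ⟨a, b, hab, hne, H⟩ := wiener_strong (hf m) ξ h0
  let F : ℕ → ℝ → ℂ := fun j => if h : j < n then f ⟨j, h⟩ else 0
  have hF : ∀ j, Integrable (F j) := by
    intro j
    by_cases h : j < n
    · simp only [F, h, dite_true]; exact hf _
    · simp only [F, h, dite_false]; exact integrable_zero _ _ _
  choose c hc hc' using fun j => H (F j) (hF j)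
  let d := n - 1 - (m : ℕ)
  have hd : n - 1 = d + m := by have := m.2; omega
  have hn : n = (m + 1) + d := by have := m.2; omega
  let φ : ℕ → ℝ → ℂ := fun i => if d ≤ i then c (i - d) else 0
  refine ⟨a, b, hab, fun i => φ i, fun i => ?_, fun x hx z hz => ?_⟩
  · by_cases h : d ≤ (i : ℕ)
    · simp only [φ, h, if_true]; exact hc _
    · simp only [φ, h, if_false]; exact integrable_zero _ _ _
  · have e1 : ∑ j ∈ Finset.range n, z ^ j * FT (F j) x = 0 := by
      rw [← Fin.sum_univ_eq_sum_range (fun j => z ^ j * FT (F j) x) n, ← hz]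
      refine Finset.sum_congr rfl fun j _ => ?_
      simp [F]
    have e2 : ∑ j ∈ Finset.range n, z ^ j * FT (F j) x =
        ∑ j ∈ Finset.range (m + 1), z ^ j * FT (F j) x := by
      symm
      refine Finset.sum_subset (Finset.range_mono m.2) fun j hj hj' => ?_
      have h1 : j < n := Finset.mem_range.1 hj
      have h2 : (m : ℕ) < j := by
        have : ¬ j < m + 1 := fun h => hj' (Finset.mem_range.2 h)
        omega
      have : FT (F j) x = 0 := by
        simp only [F, h1, dite_true]
        exact hm ⟨j, h1⟩ h2 x
      rw [this, mul_zero]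
    have e3 : F m = f m := by simp [F]
    rw [e2, Finset.sum_range_succ, e3] at e1
    have e4 : (∑ j ∈ Finset.range m, FT (c j) x * z ^ j) + z ^ (m : ℕ) = 0 := by
      have h := hne x hx
      refine (mul_eq_zero.1 ?_).resolve_right h
      rw [add_mul, Finset.sum_mul, ← e1]
      congr 1
      refine Finset.sum_congr rfl fun j _ => ?_
      rw [← hc' j x hx]
      ring
    rw [Fin.sum_univ_eq_sum_range (fun i => FT (φ i) x * z ^ i) (n - 1), hd,
      Finset.sum_range_add]
    have e5 : ∑ i ∈ Finset.range d, FT (φ i) x * z ^ i = 0 := by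
      refine Finset.sum_eq_zero fun i hi => ?_
      have : ¬ d ≤ i := by have := Finset.mem_range.1 hi; omega
      simp only [φ, this, if_false]
      simp [FT]
    have e6 : ∑ j ∈ Finset.range m, FT (φ (d + j)) x * z ^ (d + j) =
        z ^ d * ∑ j ∈ Finset.range m, FT (c j) x * z ^ j := by
      rw [Finset.mul_sum]
      refine Finset.sum_congr rfl fun j _ => ?_
      simp only [φ, le_add_iff_nonneg_right, zero_le, if_true, add_tsub_cancel_left]
      ring
    rw [e5, e6, pow_add]
    linear_combination z ^ d * e4

lemma cexpEta_injOn : Set.InjOn cexpEta (Set.Ico 0 2) := by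
  intro x hx y hy h
  unfold cexpEta at h
  obtain ⟨k, hk⟩ := Complex.exp_eq_exp_iff_exists_int.1 h
  have h1 : ((Real.pi : ℂ) * Complex.I) * (x - y - 2 * k) = 0 := by linear_combination hk
  have h2 : (Real.pi : ℂ) * Complex.I ≠ 0 := by
    simp [Real.pi_ne_zero]
  have h3 := (mul_eq_zero.1 h1).resolve_left h2
  have h4 : x - y - 2 * k = 0 := by exact_mod_cast h3
  have k1 : (k : ℝ) < 1 := by linarith [hx.2, hy.1]
  have k2 : (-1 : ℝ) < k := by linarith [hx.1, hy.2]
  have k3 : k = 0 := by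
    have : k < 1 := by exact_mod_cast k1
    have : -1 < k := by exact_mod_cast k2
    omega
  rw [k3] at h4
  simp at h4
  linarith

lemma zero_of_atLeast {n : ℕ} (Λ : Set (ℝ × ℝ)) (ξ : ℝ) (hξ : ξ ∈ projAtLeast Λ n)
    (c : Fin n → ℂ)
    (hc : ∀ η : ℝ, (ξ, η) ∈ Λ → ∑ m : Fin n, cexpEta η ^ (m : ℕ) * c m = 0) (m : Fin n) :
    c m = 0 := by
  obtain ⟨t, ht, htc⟩ := Set.exists_subset_encard_eq hξ.2
  have htf : t.Finite := Set.finite_of_encard_eq_coe htc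
  have hcard : htf.toFinset.card = n := by
    rw [htf.encard_eq_coe_toFinset_card] at htc
    exact_mod_cast htc
  let e := htf.toFinset.equivFinOfCardEq hcard
  have hmem : ∀ i, ((e.symm i : htf.toFinset) : ℝ) ∈ Img Λ ξ := fun i =>
    ht (htf.mem_toFinset.1 (e.symm i).2)
  let v : Fin n → ℂ := fun i => cexpEta (e.symm i : htf.toFinset)
  have hv : Function.Injective v := by
    intro i j hij
    have := cexpEta_injOn (hmem i).1 (hmem j).1 hij
    exact e.symm.injective (Subtype.ext this)
  have : (Matrix.vandermonde v).mulVec c = 0 := by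
    ext i
    exact hc _ (hmem i).2
  have := Matrix.eq_zero_of_mulVec_eq_zero (Matrix.det_vandermonde_ne_zero_iff.2 hv) this
  exact congrFun this m

theorem sufficient_part (n : ℕ) (hn : 2 ≤ n) (Λ : Set (ℝ × ℝ))
    (hclosed : IsClosed Λ) (hper : Periodic2 Λ)
    (hdense : Dense (projAtLeast Λ n ∪ (projExact Λ 1 \ projOneStar Λ n) ∪
      (projExact Λ (n - 1) \ projStarSu Λ n (n - 1)) ∪
      ⋃ j ∈ Finset.Icc 2 (n - 2), (projExact Λ j \ projStarSu Λ n j))) :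
    IsHUP n Λ := by
  intro f hf hΛ
  by_contra hcon
  push Not at hcon
  classical
  let S : Finset (Fin n) := Finset.univ.filter fun m => ¬ (f m =ᵐ[volume] (0 : ℝ → ℂ))
  have hS : S.Nonempty := by
    obtain ⟨m, hm⟩ := hcon
    exact ⟨m, by simp only [S, Finset.mem_filter, Finset.mem_univ, true_and]; exact hm⟩
  let m := S.max' hS
  have hmS : ¬ (f m =ᵐ[volume] (0 : ℝ → ℂ)) := (Finset.mem_filter.1 (S.max'_mem hS)).2
  have hm : ∀ j, m < j → ∀ x, FT (f j) x = 0 := by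
    intro j hj x
    have : j ∉ S := fun h => absurd (S.le_max' j h) (not_le.2 hj)
    have h2 : f j =ᵐ[volume] (0 : ℝ → ℂ) := by
      by_contra h
      exact this (Finset.mem_filter.2 ⟨Finset.mem_univ _, h⟩)
    rw [FT_congr h2]
    simp [FT]
  apply hmS
  refine FT_inj (hf m) ?_
  have su : ∀ k, ∀ ξ ∈ projExact Λ k \ projStarSu Λ n k, FT (f m) ξ = 0 := by
    intro k ξ hξ
    by_contra h0
    obtain ⟨a, b, hab, φ, hφ, H⟩ := star_of_ne f hf m hm ξ h0
    exact hξ.2 ⟨hξ.1, a, b, hab, φ, hφ, fun x hx η hη => H x hx.1 _ (hΛ x η hη.2)⟩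
  have one : ∀ ξ ∈ projExact Λ 1 \ projOneStar Λ n, FT (f m) ξ = 0 := by
    intro ξ hξ
    by_contra h0
    obtain ⟨a, b, hab, φ, hφ, H⟩ := star_of_ne f hf m hm ξ h0
    have hex : ∀ ξ' : ℝ, ∃ η : ℝ, ξ' ∈ projExact Λ 1 → Img Λ ξ' = {η} := by
      intro ξ'
      by_cases h : ξ' ∈ projExact Λ 1
      · obtain ⟨η, hη⟩ := Set.encard_eq_one.1 (by simpa using h.2)
        exact ⟨η, fun _ => hη⟩
      · exact ⟨0, fun h' => absurd h' h⟩
    choose e he using hex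
    refine hξ.2 ⟨hξ.1, fun x => cexpEta (e x), fun ξ' h' η hη => ?_, a, b, hab, φ, hφ,
      fun x hx => ?_⟩
    · rw [he ξ' h'] at hη
      rw [Set.mem_singleton_iff.1 hη]
    · have hη : e x ∈ Img Λ x := by rw [he x hx.2]; rfl
      rw [H x hx.1 _ (hΛ x _ hη.2)]
      ring
  have key : Set.EqOn (FT (f m)) (fun _ => 0) (projAtLeast Λ n ∪ (projExact Λ 1 \ projOneStar Λ n) ∪
      (projExact Λ (n - 1) \ projStarSu Λ n (n - 1)) ∪
      ⋃ j ∈ Finset.Icc 2 (n - 2), (projExact Λ j \ projStarSu Λ n j)) := by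
    rintro ξ (((h | h) | h) | h)
    · exact zero_of_atLeast Λ ξ h (fun j => FT (f j) ξ) (fun η hη => hΛ ξ η hη) m
    · exact one ξ h
    · exact su _ ξ h
    · simp only [Set.mem_iUnion] at h
      obtain ⟨j, -, h⟩ := h
      exact su _ ξ h
  have := Continuous.ext_on hdense (FT_continuous (hf m)) continuous_const key
  exact fun ξ => congrFun this ξ
end

section
/- Let n ≥ 4 be an integer and let Λ ⊂ ℝ² be a closed set that is 2-periodic with respect to the second variable. Then for every k with 2 ≤ k ≤ n−2, one has Π^{k*}_{ne}(Λ) ⊂ Π^{k*}_{su}(Λ). -/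
open MeasureTheory Complex

theorem ne_subset_su (n : ℕ) (hn : 4 ≤ n) (Λ : Set (ℝ × ℝ))
    (hclosed : IsClosed Λ) (hper : Periodic2 Λ) :
    ∀ k : ℕ, 2 ≤ k → k ≤ n - 2 → projStarNe Λ k ⊆ projStarSu Λ n k := by
  intro k hk hkn ξ hξ
  obtain ⟨hE, a, b, hab, φ, hφ, h⟩ := hξ
  refine ⟨hE, a, b, hab, ?_⟩
  obtain ⟨m, hm⟩ : ∃ m, n - 1 = m + k := ⟨n - 1 - k, by omega⟩
  rw [hm]
  refine ⟨Fin.addCases (fun _ => fun _ => 0) φ, ?_, ?_⟩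
  · intro i
    refine Fin.addCases (fun i => ?_) (fun i => ?_) i
    · simp
    · simpa using hφ i
  · intro ξ' hξ' η hη
    have h0 : FT (fun _ => 0) ξ' = 0 := by simp [FT]
    have := h ξ' hξ' η hη
    rw [Fin.sum_univ_add]
    simp only [Fin.addCases_left, Fin.addCases_right, h0, zero_mul, Finset.sum_const_zero,
      zero_add, Fin.val_natAdd, pow_add]
    rw [← mul_neg, ← this, Finset.mul_sum]
    exact Finset.sum_congr rfl fun i _ => by ring
end
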